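/- arXiv:1903.05802 — 2 statements merged into one kernel-verified Lean document; each statement's English description precedes it below -/
import Mathlib

section
/- Let σ_ℓ σ_{ℓ−1} ⋯ σ_1 be a strictly increasing word (read left to right) and let x be a letter with x < σ_ℓ, such that σ_ℓ x σ_{ℓ−1} ⋯ σ_1 is a reduced word. Then σ_ℓ x σ_{ℓ−1} ⋯ σ_1 is Coxeter–Knuth equivalent to σ_ℓ σ_{ℓ−1} ⋯ σ_1 x. -/
open List

namespace EG

/-! ## Words, permutations, and reduced words.

A word is a list of positive natural numbers `(ρ_ℓ, …, ρ_1)`, read left to right,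
representing the product of simple transpositions `s_{ρ_ℓ} ⋯ s_{ρ_1}`. -/

/-- The permutation of `ℕ` represented by a word. -/
def toPerm (ρ : List ℕ) : Equiv.Perm ℕ :=
  (ρ.map fun i => Equiv.swap i (i + 1)).prod

/-- `ρ` is a reduced word: its letters are positive, and no shorter word represents
the same permutation. -/
def IsReducedWord (ρ : List ℕ) : Prop :=
  (∀ i ∈ ρ, 1 ≤ i) ∧
    ∀ σ : List ℕ, (∀ i ∈ σ, 1 ≤ i) → toPerm σ = toPerm ρ → ρ.length ≤ σ.length

/-- `ρ` is a reduced word for the permutation `w`. -/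
def ReducedWordFor (ρ : List ℕ) (w : Equiv.Perm ℕ) : Prop :=
  IsReducedWord ρ ∧ toPerm ρ = w

/-! ## Elementary Coxeter–Knuth relations. -/

/-- The elementary Coxeter–Knuth move on a consecutive triple
`(a, b, c) = (ρ_{i+1}, ρ_i, ρ_{i−1})`. -/
def ckTriple (a b c : ℕ) : ℕ × ℕ × ℕ :=
  if a = c then (b, a, b)
  else if (c > a ∧ a > b) ∨ (c < a ∧ a < b) then (a, c, b)
  else if (a > c ∧ c > b) ∨ (a < c ∧ c < b) then (b, a, c)
  else (a, b, c)

/-- The elementary Coxeter–Knuth relation `𝔡_i`, acting on the letters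
`ρ_{i+1} ρ_i ρ_{i−1}` of a word `ρ = (ρ_ℓ, …, ρ_1)` (indexed from the right). -/
def ckMove (i : ℕ) (ρ : List ℕ) : List ℕ :=
  if 2 ≤ i ∧ i + 1 ≤ ρ.length then
    let p := ρ.length - i - 1
    let t := ckTriple (ρ.getD p 0) (ρ.getD (p + 1) 0) (ρ.getD (p + 2) 0)
    ((ρ.set p t.1).set (p + 1) t.2.1).set (p + 2) t.2.2
  else ρ

/-- Two words are Coxeter–Knuth equivalent if one is obtained from the other by a
finite sequence of elementary Coxeter–Knuth relations. -/
def CKEquiv (ρ σ : List ℕ) : Prop :=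
  ∃ ms : List ℕ, σ = ms.foldl (fun w i => ckMove i w) ρ

/-! ## Run decompositions and descent tableaux. -/

/-- Split a list into maximal blocks, breaking between consecutive letters `a`, `b`
whenever `brk a b` holds. -/
def splitWhen (brk : ℕ → ℕ → Bool) : List ℕ → List (List ℕ)
  | [] => []
  | [a] => [[a]]
  | a :: b :: rest =>
    match splitWhen brk (b :: rest) with
    | r :: rs => if brk a b then [a] :: r :: rs else (a :: r) :: rs
    | [] => [[a]]

/-- The run decomposition of a word into maximal strictly increasing runs, listed
left to right (so the list is `[ρ⁽ᵏ⁾, …, ρ⁽¹⁾]`, with `ρ⁽¹⁾` the final run). -/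
def runs (ρ : List ℕ) : List (List ℕ) := splitWhen (fun a b => decide (b ≤ a)) ρ

/-- The rows of the descent tableau `𝔻(ρ)`, listed bottom to top:
`[ρ⁽¹⁾, …, ρ⁽ᵏ⁾]`. -/
def rowsOf (ρ : List ℕ) : List (List ℕ) := (runs ρ).reverse

/-- The row reading word of a tableau whose rows are listed bottom to top:
read rows left to right, starting with the top row. -/
def wordOf (R : List (List ℕ)) : List ℕ := R.reverse.flatten

/-- The descent composition `Des(ρ) = (|ρ⁽¹⁾|, …, |ρ⁽ᵏ⁾|)`. -/
def DesComp (ρ : List ℕ) : List ℕ := (rowsOf ρ).map List.length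

/-- A list of rows (bottom to top) is an increasing Young tableau of partition shape:
rows strictly increase left to right, shape is a partition, and columns strictly
increase bottom to top. -/
def IsIncreasingYoungRows (R : List (List ℕ)) : Prop :=
  (∀ r ∈ R, r.Chain' (· < ·)) ∧
    R.Chain' (fun lo hi => hi.length ≤ lo.length ∧
      ∀ j < hi.length, lo.getD j 0 < hi.getD j 0)

/-! ## The drop map on a pair of increasing rows. -/

/-- Increment the first `n` letters of a list by `1`. -/
def incFirst : ℕ → List ℕ → List ℕ
  | 0, l => l
  | _ + 1, [] => []
  | n + 1, a :: l => (a + 1) :: incFirst n l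

/-- Decrement the first `n` letters of a list by `1`. -/
def decFirst : ℕ → List ℕ → List ℕ
  | 0, l => l
  | _ + 1, [] => []
  | n + 1, a :: l => (a - 1) :: decFirst n l

/-- `bCount t1 i [s_i, s_{i+1}, …]` is the largest `b` with `t1 = s_j + j` for all
`i ≤ j < i + b`. -/
def bCount (t1 : ℕ) : ℕ → List ℕ → ℕ
  | _, [] => 0
  | i, s :: rest => if t1 = s + i then bCount t1 (i + 1) rest + 1 else 0

/-- Index of the first failure `τ_j ≤ σ_j` in the drop alignment of `σ` below `τ`. -/
def failIdx (τ σ : List ℕ) : Option ℕ :=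
  (τ.zip σ).findIdx? (fun p => decide (p.1 ≤ p.2))

/-- Fueled computation of the drop of the row `σ` below the row `τ`, returning the
new pair (top row, bottom row). -/
def dropPairAux : ℕ → List ℕ → List ℕ → List ℕ × List ℕ
  | 0, τ, σ => (τ, σ)
  | fuel + 1, τ, σ =>
    match failIdx τ σ with
    | none =>
      if σ.length < τ.length then (τ.take σ.length, σ ++ τ.drop σ.length)
      else (τ, σ)
    | some j =>
      let x := τ.getD j 0
      let τr := τ.drop (j + 1)
      let σr := σ.drop j
      let res := dropPairAux fuel τr σr
      let l1 := (failIdx τr σr).getD τr.length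
      let b := if l1 = 0 then 0
               else if x + 1 = τr.headD 0 then bCount (τr.headD 0) 1 (σr.take l1) else 0
      (τ.take j ++ res.1, σ.take j ++ x :: incFirst b res.2)

/-- The drop of the row `σ` below the row `τ`: the pair (new top row, new bottom row). -/
def dropPair (τ σ : List ℕ) : List ℕ × List ℕ := dropPairAux (τ.length + 1) τ σ

/-- The word `drop(τσ)`. -/
def dropW (τ σ : List ℕ) : List ℕ := (dropPair τ σ).1 ++ (dropPair τ σ).2

/-- Apply `drop` to rows `i` and `i+1` (1-indexed from the bottom) of a list of rows. -/
def dropAt : ℕ → List (List ℕ) → List (List ℕ)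
  | 1, σr :: τr :: rest => (dropPair τr σr).2 :: (dropPair τr σr).1 :: rest
  | n + 2, r :: R => r :: dropAt (n + 1) R
  | _, R => R

/-- The map `drop_i` on words: replace the runs `ρ⁽ⁱ⁺¹⁾ ρ⁽ⁱ⁾` of the run
decomposition by `drop(ρ⁽ⁱ⁺¹⁾ ρ⁽ⁱ⁾)`. -/
def dropWordAt (i : ℕ) (ρ : List ℕ) : List ℕ := wordOf (dropAt i (rowsOf ρ))

/-- One sweep of all the maps `drop_i`. -/
def sweepDrop (ρ : List ℕ) : List ℕ :=
  (List.range (runs ρ).length).foldl (fun w i => dropWordAt (i + 1) w) ρ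

/-- The drop `drop(ρ)` of a word: repeatedly apply the maps `drop_i` until reaching
the fixed point (an increasing Young tableau). -/
def dropFull (ρ : List ℕ) : List ℕ := sweepDrop^[ρ.length * ρ.length + 1] ρ

/-! ## The lift map on a pair of increasing rows. -/

/-- `bCount2 x i τblk σblk` is the largest `b` with `τ_j = σ_j = x + j` for all
`i ≤ j < i + b`. -/
def bCount2 (x : ℕ) : ℕ → List ℕ → List ℕ → ℕ
  | i, t :: ts, s :: ss =>
      if t = x + i ∧ s = x + i then bCount2 x (i + 1) ts ss + 1 else 0
  | _, _, _ => 0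

/-- Index of the first failure (from the right) in the lift alignment of `τ` above
`σ`: here both rows are given reversed. -/
def liftFailIdx (τR σR : List ℕ) : Option ℕ :=
  (τR.zip σR).findIdx? (fun p => decide (p.1 < p.2))

/-- Fueled computation of the lift of the row `τ` above the row `σ`, on reversed
rows; returns the new (top row, bottom row), reversed. -/
def liftPairAuxR : ℕ → List ℕ → List ℕ → List ℕ × List ℕ
  | 0, τR, σR => (τR, σR)
  | fuel + 1, τR, σR =>
    match liftFailIdx τR σR with
    | none => (τR, σR)
    | some j =>
      let x := σR.getD j 0
      let τr := τR.drop j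
      let σr := σR.drop (j + 1)
      let res := liftPairAuxR fuel τr σr
      let τblk := (τR.take j).reverse
      let σblk := (σR.take j).reverse
      let b := if σblk.headD 0 = x + 1 then bCount2 x 1 τblk σblk else 0
      (τR.take j ++ x :: res.1, (decFirst b σblk).reverse ++ res.2)

/-- Check that the lift alignment leaves no unmatched letters of `σ` (no letter of
`σ` other than the `x_j`'s lacks a letter of `τ` above it); when some letter is
left over, the lift acts trivially. -/
def liftOkAux : ℕ → List ℕ → List ℕ → Bool
  | 0, _, _ => true
  | fuel + 1, τR, σR =>
    match liftFailIdx τR σR with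
    | none => σR.length ≤ τR.length
    | some j => liftOkAux fuel (τR.drop j) (σR.drop (j + 1))

/-- The lift of the row `τ` above the row `σ`: the pair (new top row, new bottom row). -/
def liftPair (τ σ : List ℕ) : List ℕ × List ℕ :=
  if liftOkAux (σ.length + 1) τ.reverse σ.reverse then
    let r := liftPairAuxR (σ.length + 1) τ.reverse σ.reverse
    (r.1.reverse, r.2.reverse)
  else (τ, σ)

/-- The word `lift(τσ)`. -/
def liftW (τ σ : List ℕ) : List ℕ := (liftPair τ σ).1 ++ (liftPair τ σ).2

/-- Apply `lift` to rows `i` and `i+1` (1-indexed from the bottom) of a list of rows. -/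
def liftAt : ℕ → List (List ℕ) → List (List ℕ)
  | 1, σr :: τr :: rest => (liftPair τr σr).2 :: (liftPair τr σr).1 :: rest
  | n + 2, r :: R => r :: liftAt (n + 1) R
  | _, R => R

/-- The lifting sequence `lift_{[i,j]} = lift_j ∘ ⋯ ∘ lift_i`. -/
def liftSeq (i j : ℕ) (T : List (List ℕ)) : List (List ℕ) :=
  (List.range' i (j + 1 - i)).foldl (fun t k => liftAt k t) T

/-- Fueled check that `lift_i, lift_{i+1}, …` all act faithfully, for `n` steps. -/
def faithfulAux : ℕ → ℕ → List (List ℕ) → Bool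
  | 0, _, _ => false
  | n + 1, i, T =>
    let T' := liftAt i T
    if T' = T then false
    else if n = 0 then true
    else faithfulAux n (i + 1) T'

/-- The lifting sequence `lift_{[i,j]}` acts faithfully on `T`. -/
def faithfulSeq (i j : ℕ) (T : List (List ℕ)) : Bool :=
  if i ≤ j then faithfulAux (j + 1 - i) i T else false

/-- Find the canonical move: the maximal `j` admitting some `i ≤ j` with
`lift_{[i,j]}` faithful, together with the minimal such `i`. -/
def findMove (T : List (List ℕ)) : Option (ℕ × ℕ) :=
  (List.range (T.length + 1)).reverse.findSome? (fun j =>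
    ((List.range' 1 j).find? (fun i => faithfulSeq i j T)).map (fun i => (i, j)))

/-- Fueled canonical lifting loop. -/
def liftCanonAux : ℕ → List (List ℕ) → List (List ℕ)
  | 0, T => T
  | fuel + 1, T =>
    match findMove T with
    | none => T
    | some ij => liftCanonAux fuel (liftSeq ij.1 ij.2 T)

/-- The canonical lifting algorithm applied to a tableau (rows bottom to top). -/
def liftCanon (T : List (List ℕ)) : List (List ℕ) :=
  liftCanonAux (T.flatten.length * T.length + 1) T

/-- The word `lift(ρ)`: the row reading word of the canonical lift of `𝔻(ρ)`. -/
def liftWord (ρ : List ℕ) : List ℕ := wordOf (liftCanon (rowsOf ρ))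

/-! ## Weak descent compositions. -/

/-- From the list of minima `[r_k, …, r_1]` of the runs (topmost first), compute
`[r̂_k, …, r̂_1]` where `r̂_k = r_k` and `r̂_i = min (r_i, r̂_{i+1} − 1)`. -/
def hatMins (L : List ℤ) : List ℤ :=
  (L.foldl (fun (acc : List ℤ × Option ℤ) r =>
    let v := match acc.2 with
      | none => r
      | some p => min r (p - 1)
    (acc.1 ++ [v], some v)) ([], none)).1

/-- Build the weak composition with value `lens_i` in position `hs_i` and `0`
elsewhere. -/
def buildWeakComp (hs : List ℤ) (lens : List ℕ) : List ℕ :=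
  (List.range (hs.headD 0).toNat).map (fun p =>
    match (hs.zip lens).find? (fun q => decide (q.1 = (p : ℤ) + 1)) with
    | some q => q.2
    | none => 0)

/-- The weak descent composition determined by the minima and lengths of the runs
(topmost run first); `none` means virtual. -/
def desFromBlocks (mins : List ℤ) (lens : List ℕ) : Option (List ℕ) :=
  let hs := hatMins mins
  if hs = [] then some []
  else if hs.getLastD 0 ≤ 0 then none
  else some (buildWeakComp hs lens)

/-- The weak descent composition `des(ρ)` of a word; `none` means `ρ` is virtual. -/
def desWord (ρ : List ℕ) : Option (List ℕ) :=
  desFromBlocks ((runs ρ).map (fun r => ((r.headD 0 : ℕ) : ℤ)))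
    ((runs ρ).map List.length)

/-- Prefix-sum dominance of weak compositions: `domLe a b` means
`a_1 + ⋯ + a_k ≤ b_1 + ⋯ + b_k` for all `k` (i.e. `b ≥ a`). -/
def domLe (a b : List ℕ) : Prop := ∀ k, ((a.take k).sum ≤ (b.take k).sum)

/-- A reduced word is Yamanouchi if it is non-virtual and its weak descent
composition is dominated by that of every non-virtual Coxeter–Knuth equivalent word. -/
def IsYam (ρ : List ℕ) : Prop :=
  IsReducedWord ρ ∧ ∃ d, desWord ρ = some d ∧
    ∀ σ e, CKEquiv ρ σ → desWord σ = some e → domLe d e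

/-! ## Quasisymmetric functions, slide polynomials, and generating functions.

We model formal power series in variables `x_1, x_2, …` (indexed by `ℕ`, with
variable `i` standing for `x_{i+1}`) as functions `(ℕ →₀ ℕ) → ℤ` recording
coefficients of monomials. -/

/-- `β` refines `α`: `β` splits into consecutive blocks with sums the parts of `α`. -/
def Refines (β α : List ℕ) : Prop :=
  ∃ blocks : List (List ℕ), blocks.flatten = β ∧
    List.Forall₂ (fun blk a => blk.sum = a) blocks α

/-- The flattening of a weak composition given as a finitely supported exponent
vector: the list of its nonzero values, in order. -/
def flatOf (b : ℕ →₀ ℕ) : List ℕ :=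
  ((List.range (b.support.sup id + 1)).map b).filter (fun x => decide (x ≠ 0))

open Classical in
/-- The fundamental quasisymmetric function `F_α`. -/
noncomputable def Fqs (α : List ℕ) : (ℕ →₀ ℕ) → ℤ :=
  fun b => if Refines (flatOf b) α then 1 else 0

open Classical in
/-- The fundamental slide polynomial `𝔉_a` of a weak composition `a`. -/
noncomputable def FSlide (a : List ℕ) : (ℕ →₀ ℕ) → ℤ :=
  fun b =>
    if (∀ i, a.length ≤ i → b i = 0) ∧
       (∀ k, (a.take k).sum ≤ ∑ i ∈ Finset.range k, b i) ∧
       Refines (flatOf b) (a.filter (fun x => decide (x ≠ 0))) then 1 else 0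

/-- `𝔉` extended to virtual indices by `𝔉_∅ = 0`. -/
noncomputable def FSlideO : Option (List ℕ) → (ℕ →₀ ℕ) → ℤ
  | none => 0
  | some a => FSlide a

/-- The Stanley symmetric function `S_w`. -/
noncomputable def StanleySym (w : Equiv.Perm ℕ) : (ℕ →₀ ℕ) → ℤ :=
  ∑ᶠ ρ ∈ {ρ : List ℕ | ReducedWordFor ρ w}, Fqs (DesComp ρ)

/-- The Schubert polynomial `𝔖_w`. -/
noncomputable def Schubert (w : Equiv.Perm ℕ) : (ℕ →₀ ℕ) → ℤ :=
  ∑ᶠ ρ ∈ {ρ : List ℕ | ReducedWordFor ρ w}, FSlideO (desWord ρ)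

/-! ## Standard Young tableaux and Schur functions. -/

/-- The (bottom-to-top) row index of the row of `T` containing the entry `e`. -/
def rowOf (T : List (List ℕ)) (e : ℕ) : ℕ := T.findIdx (fun r => r.contains e)

/-- The column index of the entry `e` in `T`. -/
def colOf (T : List (List ℕ)) (e : ℕ) : ℕ :=
  (T.getD (rowOf T e) []).findIdx (fun z => z == e)

/-- `T` (rows listed bottom to top) is a standard Young tableau. -/
def IsSYT (T : List (List ℕ)) : Prop :=
  (∀ r ∈ T, r.Chain' (· < ·)) ∧
    T.Chain' (fun lo hi => hi.length ≤ lo.length ∧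
      ∀ j < hi.length, lo.getD j 0 < hi.getD j 0) ∧
    [] ∉ T ∧
    T.flatten.Perm (List.range' 1 T.flatten.length)

/-- The descent composition of a standard Young tableau: `i` is a descent when
`i+1` lies weakly left of `i`. -/
def sytDes (T : List (List ℕ)) : List ℕ :=
  (splitWhen (fun a _ => decide (colOf T (a + 1) ≤ colOf T a))
    (List.range' 1 T.flatten.length)).map List.length

/-- The Schur function `s_λ`, for a partition `λ` given as the list of row lengths
bottom to top. -/
noncomputable def Schur (lam : List ℕ) : (ℕ →₀ ℕ) → ℤ :=
  ∑ᶠ T ∈ {T : List (List ℕ) | IsSYT T ∧ T.map List.length = lam}, Fqs (sytDes T)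

/-! ## Standard key tableaux and Demazure characters. -/

/-- `T` is a standard key tableau of shape the weak composition `a`: rows (listed
bottom to top, with row `i` of length `a_i`, possibly `0`) strictly decrease left to
right, the entries are `1, …, |a|`, and whenever an entry `i` lies above an entry
`k` in the same column with `i < k`, some entry `j` right of `k` satisfies `i < j`. -/
def IsSKT (a : List ℕ) (T : List (List ℕ)) : Prop :=
  T.map List.length = a ∧
    (∀ r ∈ T, r.Chain' (· > ·)) ∧
    T.flatten.Perm (List.range' 1 a.sum) ∧
    ∀ lo hi, lo < hi → hi < T.length →
      ∀ c, c < (T.getD hi []).length → c < (T.getD lo []).length →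
        (T.getD hi []).getD c 0 < (T.getD lo []).getD c 0 →
        ∃ c', c < c' ∧ c' < (T.getD lo []).length ∧
          (T.getD hi []).getD c 0 < (T.getD lo []).getD c' 0

/-- The runs of the word `n ⋯ 2 1` determined by the descents of a standard key
tableau `T` (where `i` is a descent when `i+1` lies weakly right of `i`). -/
def sktRuns (T : List (List ℕ)) : List (List ℕ) :=
  splitWhen (fun _ b => decide (colOf T b ≤ colOf T (b + 1)))
    ((List.range' 1 T.flatten.length).reverse)

/-- The minimal row (1-indexed from the bottom) among the cells of the entries of
`r` in `T`. -/
def minRow (T : List (List ℕ)) (r : List ℕ) : ℕ :=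
  ((r.map (fun e => rowOf T e + 1)).min?).getD 0

/-- The weak descent composition `des(T)` of a standard key tableau; `none` means
`T` is virtual. -/
def desSKT (T : List (List ℕ)) : Option (List ℕ) :=
  (desFromBlocks ((sktRuns T).map (fun r => ((minRow T r : ℕ) : ℤ)))
    ((sktRuns T).map List.length)).map
      (fun d => d ++ List.replicate (T.length - d.length) 0)

/-- The Demazure character (key polynomial) `κ_a`. -/
noncomputable def KeyPoly (a : List ℕ) : (ℕ →₀ ℕ) → ℤ :=
  ∑ᶠ T ∈ {T : List (List ℕ) | IsSKT a T}, FSlideO (desSKT T)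

/-- `κ` extended to virtual indices by `κ_∅ = 0`. -/
noncomputable def KeyPolyO : Option (List ℕ) → (ℕ →₀ ℕ) → ℤ
  | none => 0
  | some a => KeyPoly a

/-! ## Edelman–Greene insertion and weak insertion. -/

/-- Edelman–Greene insertion of `x` into a single row: either append `x`, or bump
the smallest entry exceeding `x` (suppressing the replacement when that entry is
`x+1` and `x` already occurs in the row). -/
def eginsRow (x : ℕ) (row : List ℕ) : List ℕ × Option ℕ :=
  match row.findIdx? (fun z => decide (x < z)) with
  | none => (row ++ [x], none)
  | some j =>
    let y := row.getD j 0
    (if y = x + 1 ∧ row.contains x then row else row.set j x, some y)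

/-- Edelman–Greene insertion of `x` into a tableau (rows bottom to top). -/
def egins : ℕ → List (List ℕ) → List (List ℕ)
  | x, [] => [[x]]
  | x, row :: rest =>
    match eginsRow x row with
    | (r, none) => r :: rest
    | (r, some y) => r :: egins y rest

/-- The Edelman–Greene insertion tableau `P(ρ)` of a word. -/
def PEG (ρ : List ℕ) : List (List ℕ) := ρ.foldl (fun P x => egins x P) []

/-- One sweep of all the maps `drop_i` on a tableau (rows bottom to top). -/
def sweepDropT (T : List (List ℕ)) : List (List ℕ) :=
  (List.range T.length).foldl (fun t i => dropAt (i + 1) t) T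

/-- The drop of a tableau: repeatedly drop until reaching the increasing Young
tableau of the class. -/
def dropCanon (T : List (List ℕ)) : List (List ℕ) :=
  sweepDropT^[T.flatten.length * T.length + 1] T

/-- Weak insertion of the letter `x` into a Yamanouchi key tableau `P`:
`lift (drop P ← x)`. -/
def winsert (x : ℕ) (P : List (List ℕ)) : List (List ℕ) :=
  liftCanon (egins x (dropCanon P))

/-- The weak insertion tableau `P̃(ρ)` (rows bottom to top). -/
def Pweak (ρ : List ℕ) : List (List ℕ) := ρ.foldl (fun P x => winsert x P) []

/-- The Yamanouchi word of the Coxeter–Knuth class of `ρ`: the row reading word of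
`P̃(ρ)`. -/
def yamWord (ρ : List ℕ) : List ℕ := wordOf (Pweak ρ)

/-- The shape (weak composition) of the weak insertion tableau of the first `m`
letters of `ρ`. -/
def shapeAt (ρ : List ℕ) (m : ℕ) : List ℕ :=
  (desWord (wordOf (Pweak (ρ.take m)))).getD []

/-- Append the entry `e` at the end of row `j` (0-indexed from the bottom),
extending with empty rows as needed. -/
def placeEntry (Q : List (List ℕ)) (j e : ℕ) : List (List ℕ) :=
  let Q' := Q ++ List.replicate (j + 1 - Q.length) []
  Q'.set j (Q'.getD j [] ++ [e])

/-- The (0-indexed) row in which the shape grows from `aold` to `anew`. -/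
def growRow (aold anew : List ℕ) : ℕ :=
  ((List.range anew.length).find?
    (fun j => decide (aold.getD j 0 ≠ anew.getD j 0))).getD 0

/-- The weak recording tableau `Q̃(ρ)`: entry `i` is placed in the cell where the
shape grows at the step inserting `ρ_i` (entries are placed in decreasing order). -/
def Qweak (ρ : List ℕ) : List (List ℕ) :=
  (List.range ρ.length).foldl (fun Q m =>
    placeEntry Q (growRow (shapeAt ρ m) (shapeAt ρ (m + 1))) (ρ.length - m)) []

/-! ## Elementary weak dual equivalence involutions. -/

/-- Column reading order on entries: by column, and bottom to top within a column. -/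
def colKeyLe (T : List (List ℕ)) (x y : ℕ) : Bool :=
  decide (colOf T x < colOf T y ∨ (colOf T x = colOf T y ∧ rowOf T x ≤ rowOf T y))

/-- Sort three values by a boolean order. -/
def sort3 (le : ℕ → ℕ → Bool) (a b c : ℕ) : ℕ × ℕ × ℕ :=
  if le a b then
    if le b c then (a, b, c) else if le a c then (a, c, b) else (c, a, b)
  else
    if le a c then (b, a, c) else if le b c then (b, c, a) else (c, b, a)

/-- Relabel the entries `x, y, z` of `T` as `x', y', z'` respectively. -/
def relabel3 (T : List (List ℕ)) (x y z x' y' z' : ℕ) : List (List ℕ) :=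
  T.map (List.map (fun t =>
    if t = x then x' else if t = y then y' else if t = z then z' else t))

/-- The elementary weak dual equivalence involution `d̃_i` on standard key tableaux:
with `u, v, w` the cells of `i−1, i, i+1` in column reading order, if `u` and `w`
share a row and `v` does not, cycle the three entries so that `i` shares a row with
`i ± 1`; else if `v` holds `i+1` swap `i−1, i`; else if `v` holds `i−1` swap
`i, i+1`; otherwise fix `T`. -/
def wde (i : ℕ) (T : List (List ℕ)) : List (List ℕ) :=
  let s := sort3 (colKeyLe T) (i - 1) i (i + 1)
  let u := s.1
  let v := s.2.1
  let w := s.2.2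
  if rowOf T u = rowOf T w ∧ rowOf T v ≠ rowOf T u then
    let T1 := relabel3 T u v w w u v
    let T2 := relabel3 T u v w v w u
    if rowOf T1 i = rowOf T1 (i - 1) ∨ rowOf T1 i = rowOf T1 (i + 1) then T1 else T2
  else if v = i + 1 then relabel3 T (i - 1) i (i + 1) i (i - 1) (i + 1)
  else if v = i - 1 then relabel3 T (i - 1) i (i + 1) (i - 1) (i + 1) i
  else T

/-- Remove trailing zero parts of a weak composition (two weak compositions are
identified when they differ only in trailing zeros). -/
def trimZeros (a : List ℕ) : List ℕ :=
  (a.reverse.dropWhile (fun x => x == 0)).reverse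

/-- The transposition `s_i` acting on compositions by interchanging the parts in
positions `i` and `i+1` (1-indexed). -/
def swapParts (i : ℕ) (c : List ℕ) : List ℕ :=
  if 1 ≤ i ∧ i < c.length then
    (c.set (i - 1) (c.getD i 0)).set i (c.getD (i - 1) 0)
  else c

end EG

namespace EG

theorem ckMove_of_length_le {i : ℕ} {ρ : List ℕ} (h : ρ.length ≤ i) : ckMove i ρ = ρ :=
  if_neg fun hi => by omega

theorem ckMove_cons {i : ℕ} {ρ : List ℕ} (h : i < ρ.length) (c : ℕ) :
    ckMove i (c :: ρ) = c :: ckMove i ρ := by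
  unfold ckMove
  by_cases hi : 2 ≤ i
  · have position_shift : (c :: ρ).length - i - 1 = (ρ.length - i - 1) + 1 := by
      rw [length_cons]; omega
    rw [if_pos ⟨hi, h.trans (Nat.lt_succ_self _)⟩, if_pos ⟨hi, h⟩, position_shift]
    rfl
  · rw [if_neg fun h' => hi h'.1, if_neg fun h' => hi h'.1]

theorem ckMove_cons_cons_cons (a b c : ℕ) (ρ : List ℕ) :
    ckMove (ρ.length + 2) (a :: b :: c :: ρ) =
      (ckTriple a b c).1 :: (ckTriple a b c).2.1 :: (ckTriple a b c).2.2 :: ρ := by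
  have in_range : 2 ≤ ρ.length + 2 ∧ ρ.length + 2 + 1 ≤ (a :: b :: c :: ρ).length := by
    simp only [length_cons]; omega
  have position_zero : (a :: b :: c :: ρ).length - (ρ.length + 2) - 1 = 0 := by
    simp only [length_cons]; omega
  rw [ckMove, if_pos in_range, position_zero]
  rfl

theorem ckTriple_of_lt_of_lt {a b c : ℕ} (hba : b < a) (hac : a < c) :
    ckTriple a b c = (a, c, b) := by
  rw [ckTriple, if_neg hac.ne, if_pos (Or.inl ⟨hac, hba⟩)]

namespace CKEquiv

theorem refl (ρ : List ℕ) : CKEquiv ρ ρ :=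
  ⟨[], rfl⟩

theorem trans {ρ σ τ : List ℕ} : CKEquiv ρ σ → CKEquiv σ τ → CKEquiv ρ τ := by
  rintro ⟨ms, rfl⟩ ⟨ns, rfl⟩
  exact ⟨ms ++ ns, foldl_append.symm⟩

theorem of_ckMove (i : ℕ) (ρ : List ℕ) : CKEquiv ρ (ckMove i ρ) :=
  ⟨[i], rfl⟩

theorem cons (c : ℕ) {ρ σ : List ℕ} : CKEquiv ρ σ → CKEquiv (c :: ρ) (c :: σ) := by
  rintro ⟨ms, rfl⟩
  induction ms generalizing ρ with
  | nil => exact refl _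
  | cons i ms ih =>
    rw [foldl_cons]
    rcases lt_or_ge i ρ.length with hi | hi
    · exact (ckMove_cons hi c ▸ of_ckMove i (c :: ρ)).trans ih
    · -- This move fixes `ρ` but may act on the longer word `c :: ρ`, so it is skipped.
      rw [ckMove_of_length_le hi]
      exact ih

theorem swap_of_lt_of_lt {a x b : ℕ} (hxa : x < a) (hab : a < b) (ρ : List ℕ) :
    CKEquiv (a :: x :: b :: ρ) (a :: b :: x :: ρ) := by
  simpa only [ckMove_cons_cons_cons, ckTriple_of_lt_of_lt hxa hab] using
    of_ckMove (ρ.length + 2) (a :: x :: b :: ρ)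

end CKEquiv

theorem slide_lemma_general {a x : ℕ} {rest : List ℕ}
    (hinc : (a :: rest).IsChain (· < ·)) (hx : x < a) :
    CKEquiv (a :: x :: rest) ((a :: rest) ++ [x]) := by
  induction rest generalizing a with
  | nil => exact CKEquiv.refl _
  | cons b rest ih =>
    obtain ⟨hab, hinc_tail⟩ := isChain_cons_cons.mp hinc
    have slide_tail : CKEquiv (b :: x :: rest) ((b :: rest) ++ [x]) :=
      ih hinc_tail (hx.trans hab)
    exact (CKEquiv.swap_of_lt_of_lt hx hab rest).trans (slide_tail.cons a)

/-- Let `σ_ℓ σ_{ℓ−1} ⋯ σ_1` be a strictly increasing word (read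
left to right) and let `x` be a letter with `x < σ_ℓ`, such that
`σ_ℓ x σ_{ℓ−1} ⋯ σ_1` is a reduced word.  Then `σ_ℓ x σ_{ℓ−1} ⋯ σ_1` is
Coxeter–Knuth equivalent to `σ_ℓ σ_{ℓ−1} ⋯ σ_1 x`. -/
theorem slide_lemma (a : ℕ) (rest : List ℕ) (x : ℕ)
    (hinc : (a :: rest).Chain' (· < ·)) (hx : x < a)
    (hred : IsReducedWord (a :: x :: rest)) :
    CKEquiv (a :: x :: rest) ((a :: rest) ++ [x]) :=
  slide_lemma_general hinc hx

end EG
end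

section
/- For ρ a reduced word with run decomposition (ρ⁽ᵏ⁾ | ⋯ | ρ⁽¹⁾), the descent tableau 𝔻(ρ) is an increasing Young tableau if and only if drop_i(ρ) = ρ for all 1 ≤ i < k. -/
open List

namespace EG

/-! Let `σ` be a row below `τ` with `σ₁` smaller than some letter of `τ`. If the columns do not
increase, then the new top row is a proper sublist of `τ`, nonempty because a letter larger than
`σ₁` stays in it, and the new bottom row starts with `min τ₁ σ₁`. In the word `τσ`, the letter
following a nonempty proper prefix of `τ` exceeds `τ₁`, so the drop changes the word. When adjacent
letters of a word differ, consecutive runs `τ`, `σ` satisfy the hypothesis, since the last letter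
of `τ` exceeds `σ₁`. -/

theorem eq_of_append_eq_append_of_isChain_lt {α : Type*} [Preorder α] {l₁ l₂ m₁ m₂ : List α}
    (hl : l₁.IsChain (· < ·)) (h : m₁ ++ m₂ = l₁ ++ l₂) (hlen : m₁.length ≤ l₁.length)
    (hne : m₁ ≠ []) (hhead : ∀ a ∈ l₁.head?, ∀ b ∈ m₂.head?, b ≤ a) : m₁ = l₁ := by
  obtain ⟨k, rfl⟩ := prefix_of_prefix_length_le ⟨m₂, h⟩ (prefix_append l₁ l₂) hlen
  obtain ⟨a, m₁, rfl⟩ := exists_cons_of_ne_nil hne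
  obtain rfl : m₂ = k ++ l₂ := by simpa using h
  cases k with
  | nil => simp
  | cons b k =>
    have hab : a < b := rel_of_pairwise_cons hl.pairwise (by simp)
    exact absurd (hhead a (by simp) b (by simp)) hab.not_ge

theorem splitWhen_eq_splitBy (brk : ℕ → ℕ → Bool) :
    ∀ l : List ℕ, splitWhen brk l = l.splitBy fun a b => !brk a b
  | [] => rfl
  | [_] => rfl
  | a :: b :: l => by
    rw [splitWhen, splitWhen_eq_splitBy brk (b :: l)]
    have hne : (b :: l).splitBy (fun a b => !brk a b) ≠ [] := splitBy_ne_nil.2 (cons_ne_nil b l)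
    obtain ⟨r, rs, hr⟩ := exists_cons_of_ne_nil hne
    obtain ⟨hflat, hnil, hchain, hbreak⟩ := splitBy_eq_iff.1 hr
    obtain ⟨b', r, rfl⟩ := exists_cons_of_ne_nil fun h : r = [] => hnil (h ▸ mem_cons_self)
    obtain rfl : b = b' := (cons.inj hflat).1
    by_cases hab : brk a b
    · have hsplit := splitBy_append_cons (r := fun a b => !brk a b) (l := [a]) (a := b) l
        (by simp [hab])
      rw [singleton_append, splitBy_of_isChain (cons_ne_nil a []) (isChain_singleton a)] at hsplit
      simp [hr, hab, hsplit]
    · have hsplit : (a :: b :: l).splitBy (fun a b => !brk a b) = (a :: b :: r) :: rs := by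
        refine splitBy_eq_iff.2 ⟨by simp [hflat], by simpa using hnil, ?_, ?_⟩
        · rw [forall_mem_cons] at hchain ⊢
          exact ⟨hchain.1.cons_cons (by simpa using hab), hchain.2⟩
        · simpa [isChain_cons] using hbreak
      simp [hr, hab, hsplit]

theorem runs_eq_splitBy (ρ : List ℕ) : runs ρ = ρ.splitBy fun a b => decide (a < b) := by
  simp only [runs, splitWhen_eq_splitBy, ← decide_not, not_le]

@[simp]
theorem flatten_runs (ρ : List ℕ) : (runs ρ).flatten = ρ := by
  rw [runs_eq_splitBy, flatten_splitBy]

theorem nil_notMem_runs (ρ : List ℕ) : [] ∉ runs ρ := by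
  rw [runs_eq_splitBy]
  exact nil_notMem_splitBy _ ρ

theorem isChain_of_mem_runs {ρ r : List ℕ} (hr : r ∈ runs ρ) : r.IsChain (· < ·) := by
  rw [runs_eq_splitBy] at hr
  simpa using isChain_of_mem_splitBy hr

theorem isChain_runs_of_isChain_ne {ρ : List ℕ} (h : ρ.IsChain (· ≠ ·)) :
    (runs ρ).IsChain fun τ σ => ∃ s ∈ σ.head?, ∃ t ∈ τ, s < t := by
  rw [← flatten_runs ρ, isChain_flatten (nil_notMem_runs ρ)] at h
  have hbreak := isChain_getLast_head_splitBy (fun a b => decide (a < b)) ρ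
  rw [← runs_eq_splitBy] at hbreak
  refine isChain_iff_getElem.2 fun i hi => ?_
  obtain ⟨hτ, hσ, hle⟩ := hbreak.getElem i hi
  have hne := h.2.getElem i hi _ (getLast_mem_getLast? hτ) _ (head_mem_head? hσ)
  exact ⟨_, head_mem_head? hσ, _, getLast_mem hτ, by grind⟩

@[simp]
theorem wordOf_rowsOf (ρ : List ℕ) : wordOf (rowsOf ρ) = ρ := by
  simp [wordOf, rowsOf]

@[simp]
theorem length_rowsOf (ρ : List ℕ) : (rowsOf ρ).length = (runs ρ).length :=
  length_reverse

theorem isChain_of_mem_rowsOf {ρ r : List ℕ} (hr : r ∈ rowsOf ρ) : r.IsChain (· < ·) :=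
  isChain_of_mem_runs (mem_reverse.1 hr)

theorem isChain_rowsOf_of_isChain_ne {ρ : List ℕ} (h : ρ.IsChain (· ≠ ·)) :
    (rowsOf ρ).IsChain fun σ τ => ∃ s ∈ σ.head?, ∃ t ∈ τ, s < t :=
  isChain_reverse.2 (isChain_runs_of_isChain_ne h)

theorem IsReducedWord.isChain_ne {ρ : List ℕ} (h : IsReducedWord ρ) : ρ.IsChain (· ≠ ·) := by
  refine isChain_iff_forall_rel_of_append_cons_cons.2 fun a b l₁ l₂ hρ hab => ?_
  subst hρ hab
  have hlen := h.2 (l₁ ++ l₂) (fun i hi => h.1 i (by grind)) (by simp [toPerm])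
  simp at hlen

/-- The row `τ` can be stacked on the row `σ` in an increasing Young tableau: it is no longer than
`σ`, and its letters exceed the letters of `σ` below them. -/
def FitsAbove (τ σ : List ℕ) : Prop :=
  τ.length ≤ σ.length ∧ ∀ j < τ.length, σ.getD j 0 < τ.getD j 0

theorem isIncreasingYoungRows_iff {R : List (List ℕ)} :
    IsIncreasingYoungRows R ↔
      (∀ r ∈ R, r.IsChain (· < ·)) ∧ R.IsChain fun σ τ => FitsAbove τ σ :=
  Iff.rfl

theorem failIdx_eq_none_iff {τ σ : List ℕ} :
    failIdx τ σ = none ↔ ∀ j < τ.length, j < σ.length → σ.getD j 0 < τ.getD j 0 := by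
  simp only [failIdx, findIdx?_eq_none_iff, decide_eq_false_iff_not, not_le, forall_mem_iff_getElem,
    length_zip, lt_min_iff, getElem_zip]
  grind

theorem failIdx_eq_some_iff {τ σ : List ℕ} {j : ℕ} :
    failIdx τ σ = some j ↔ j < τ.length ∧ j < σ.length ∧ τ.getD j 0 ≤ σ.getD j 0 ∧
      ∀ i < j, σ.getD i 0 < τ.getD i 0 := by
  simp only [failIdx, findIdx?_eq_some_iff_getElem, length_zip, getElem_zip]
  grind

theorem dropPairAux_succ_of_failIdx_eq_none {n : ℕ} {τ σ : List ℕ} (h : failIdx τ σ = none) :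
    dropPairAux (n + 1) τ σ = (τ.take σ.length, σ ++ τ.drop σ.length) := by
  rw [dropPairAux, h]
  by_cases hlen : σ.length < τ.length
  · simp [hlen]
  · simp [hlen, take_of_length_le, drop_of_length_le, not_lt.1 hlen]

theorem dropPairAux_succ_fst_of_failIdx_eq_some {n : ℕ} {τ σ : List ℕ} {j : ℕ}
    (h : failIdx τ σ = some j) :
    (dropPairAux (n + 1) τ σ).1 =
      τ.take j ++ (dropPairAux n (τ.drop (j + 1)) (σ.drop j)).1 := by
  rw [dropPairAux, h]

theorem dropPairAux_fst_sublist (n : ℕ) (τ σ : List ℕ) : (dropPairAux n τ σ).1 <+ τ := by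
  induction n generalizing τ σ with
  | zero => exact Sublist.refl τ
  | succ n ih =>
    cases h : failIdx τ σ with
    | none =>
      rw [dropPairAux_succ_of_failIdx_eq_none h]
      exact take_sublist _ τ
    | some j =>
      rw [dropPairAux_succ_fst_of_failIdx_eq_some h]
      have herase : τ.take j ++ τ.drop (j + 1) <+ τ := by
        rw [← eraseIdx_eq_take_drop_succ]
        exact eraseIdx_sublist τ j
      exact ((ih _ _).append_left _).trans herase

theorem dropPairAux_fst_ne_nil (n : ℕ) {τ σ : List ℕ} {s t : ℕ} (ht : t ∈ τ) (hst : s < t) :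
    (dropPairAux n τ (s :: σ)).1 ≠ [] := by
  induction n generalizing τ with
  | zero => exact ne_nil_of_mem ht
  | succ n ih =>
    have hτ : τ ≠ [] := ne_nil_of_mem ht
    cases h : failIdx τ (s :: σ) with
    | none => simp [dropPairAux_succ_of_failIdx_eq_none h, hτ]
    | some j =>
      rw [dropPairAux_succ_fst_of_failIdx_eq_some h]
      cases j with
      | succ j => simp [hτ]
      | zero =>
        obtain ⟨t₁, τ, rfl⟩ := exists_cons_of_ne_nil hτ
        have hle : t₁ ≤ s := (failIdx_eq_some_iff.1 h).2.2.1
        have htail : t ∈ τ := (mem_cons.1 ht).resolve_left (by lia)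
        simpa using ih htail

theorem head?_dropPairAux_succ_snd (n t s : ℕ) (τ σ : List ℕ) :
    (dropPairAux (n + 1) (t :: τ) (s :: σ)).2.head? = some (min t s) := by
  cases h : failIdx (t :: τ) (s :: σ) with
  | none =>
    have hst : s < t := failIdx_eq_none_iff.1 h 0 (by simp) (by simp)
    simp [dropPairAux_succ_of_failIdx_eq_none h, hst.le]
  | some j =>
    obtain ⟨-, -, hle, hlt⟩ := failIdx_eq_some_iff.1 h
    rw [dropPairAux, h]
    cases j with
    | zero => simpa using hle
    | succ j => simpa using (hlt 0 j.succ_pos).le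

theorem FitsAbove.dropPair_eq {τ σ : List ℕ} (h : FitsAbove τ σ) : dropPair τ σ = (τ, σ) := by
  have hnone : failIdx τ σ = none := failIdx_eq_none_iff.2 fun j hj _ => h.2 j hj
  simp [dropPair, dropPairAux_succ_of_failIdx_eq_none hnone, h.1]

theorem fitsAbove_of_dropPair_fst_eq {τ σ : List ℕ} (h : (dropPair τ σ).1 = τ) :
    FitsAbove τ σ := by
  rw [dropPair] at h
  have hlen := congrArg length h
  cases hfail : failIdx τ σ with
  | none =>
    rw [dropPairAux_succ_of_failIdx_eq_none hfail, length_take] at hlen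
    have hle : τ.length ≤ σ.length := by lia
    exact ⟨hle, fun j hj => failIdx_eq_none_iff.1 hfail j hj (hj.trans_le hle)⟩
  | some j =>
    have hj : j < τ.length := (failIdx_eq_some_iff.1 hfail).1
    have hrest := (dropPairAux_fst_sublist τ.length (τ.drop (j + 1)) (σ.drop j)).length_le
    rw [dropPairAux_succ_fst_of_failIdx_eq_some hfail, length_append, length_take] at hlen
    rw [length_drop] at hrest
    lia

theorem dropW_eq_append_iff {τ σ : List ℕ} (hτ : τ.IsChain (· < ·))
    (h : ∃ s ∈ σ.head?, ∃ t ∈ τ, s < t) : dropW τ σ = τ ++ σ ↔ FitsAbove τ σ := by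
  refine ⟨fun hword => ?_, fun hfit => by simp [dropW, hfit.dropPair_eq]⟩
  obtain ⟨s, hs, t, ht, hst⟩ := h
  obtain ⟨σ, rfl⟩ := head?_eq_some_iff.1 hs
  obtain ⟨t₁, τ, rfl⟩ := exists_cons_of_ne_nil (ne_nil_of_mem ht)
  have hlen : (dropPair (t₁ :: τ) (s :: σ)).1.length ≤ (t₁ :: τ).length :=
    (dropPairAux_fst_sublist _ _ _).length_le
  have hne : (dropPair (t₁ :: τ) (s :: σ)).1 ≠ [] := dropPairAux_fst_ne_nil _ ht hst
  have hhead : (dropPair (t₁ :: τ) (s :: σ)).2.head? = some (min t₁ s) :=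
    head?_dropPairAux_succ_snd _ t₁ s τ σ
  exact fitsAbove_of_dropPair_fst_eq <|
    eq_of_append_eq_append_of_isChain_lt hτ hword hlen hne (by simp [hhead])

theorem wordOf_cons (r : List ℕ) (R : List (List ℕ)) : wordOf (r :: R) = wordOf R ++ r := by
  simp [wordOf]

theorem wordOf_dropAt_eq_iff {R : List (List ℕ)} {i : ℕ} (hi : i + 1 < R.length) :
    wordOf (dropAt (i + 1) R) = wordOf R ↔ dropW R[i + 1] R[i] = R[i + 1] ++ R[i] := by
  induction i generalizing R with
  | zero =>
    obtain ⟨σ, R, rfl⟩ := exists_cons_of_length_pos (Nat.zero_lt_of_lt hi)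
    obtain ⟨τ, R, rfl⟩ := exists_cons_of_length_pos (Nat.lt_of_succ_lt_succ hi)
    simp [dropAt, wordOf_cons, dropW]
  | succ i ih =>
    obtain ⟨r, R, rfl⟩ := exists_cons_of_length_pos (Nat.zero_lt_of_lt hi)
    simpa [dropAt, wordOf_cons] using ih (Nat.lt_of_succ_lt_succ hi)

theorem isChain_fitsAbove_iff {R : List (List ℕ)} (hrows : ∀ r ∈ R, r.IsChain (· < ·))
    (hheads : R.IsChain fun σ τ => ∃ s ∈ σ.head?, ∃ t ∈ τ, s < t) :
    (R.IsChain fun σ τ => FitsAbove τ σ) ↔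
      ∀ i, i + 1 < R.length → wordOf (dropAt (i + 1) R) = wordOf R := by
  refine isChain_iff_getElem.trans (forall₂_congr fun i hi => ?_)
  rw [wordOf_dropAt_eq_iff hi,
    dropW_eq_append_iff (hrows _ (getElem_mem hi)) (hheads.getElem i hi)]

theorem increasing_iff_drop_fixed_general (ρ : List ℕ) (h : ρ.IsChain (· ≠ ·)) :
    IsIncreasingYoungRows (rowsOf ρ) ↔
      ∀ i, 1 ≤ i → i + 1 ≤ (runs ρ).length → dropWordAt i ρ = ρ := by
  have hrows : ∀ r ∈ rowsOf ρ, r.IsChain (· < ·) := fun _ => isChain_of_mem_rowsOf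
  rw [isIncreasingYoungRows_iff, and_iff_right hrows,
    isChain_fitsAbove_iff hrows (isChain_rowsOf_of_isChain_ne h), wordOf_rowsOf, length_rowsOf]
  refine ⟨fun hdrop i hi hlen => ?_, fun hdrop i hi => hdrop (i + 1) i.succ_pos hi⟩
  obtain ⟨i, rfl⟩ := Nat.exists_eq_add_of_le' hi
  exact hdrop i hlen

/-- For `ρ` a reduced word with run decomposition
`(ρ⁽ᵏ⁾ | ⋯ | ρ⁽¹⁾)`, the descent tableau `𝔻(ρ)` is an increasing Young tableau if
and only if `drop_i(ρ) = ρ` for all `1 ≤ i < k`. -/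
theorem increasing_iff_drop_fixed (ρ : List ℕ) (h : IsReducedWord ρ) :
    IsIncreasingYoungRows (rowsOf ρ) ↔
      ∀ i, 1 ≤ i → i + 1 ≤ (runs ρ).length → dropWordAt i ρ = ρ := by
  exact increasing_iff_drop_fixed_general ρ h.isChain_ne

end EG
end
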